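/- arXiv:2108.02420 — 7 statements merged into one kernel-verified Lean document; each statement's English description precedes it below -/
import Mathlib

section
/- (Theorem 1 of the paper.) Let $n_a, n_b$ be natural numbers, let $d$ be a norm on $\mathbb{R}^{n_a}$, and let $F : (\mathbb{R}^{n_a} \times \mathbb{R}^{n_b}) \to \mathbb{R} \to (\mathbb{R}^{n_a} \times \mathbb{R}^{n_b})$ be a time-dependent vector field depending only on the $b$-component of the state, i.e. $F((x_a,x_b),t) = G(x_b,t)$ for some $G$ with $x_b \mapsto (G(x_b,t))_b$ Lipschitz uniformly in $t$ and continuous in $t$. Let $R > 0$. If $x_i, x_j : \mathbb{R} \to \mathbb{R}^{n_a} \times \mathbb{R}^{n_b}$ are solutions of $\dot{x}(t) = F(x(t),t)$ on $[t_0,\infty)$ (the two vehicles applying the same control signal) such that $d\big((x_i(t_0))_a - (x_j(t_0))_a\big) > R$ and $(x_i(t_0))_b = (x_j(t_0))_b$, then $d\big((x_i(t))_a - (x_j(t))_a\big) > R$ for all $t \ge t_0$; i.e. the two vehicles remain outside each other's danger zone for all time. -/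
/-- Theorem 1 of the paper: two vehicles with dynamics depending only on the
`b`-component of the state, applying the same control, that start outside each
other's danger zone (measured by the norm `d` on the `a`-components) and with
equal `b`-components, remain outside each other's danger zone for all time. -/
theorem in_cluster_pair_safe (na nb : ℕ)
    (d : Seminorm ℝ (Fin na → ℝ)) (hd : ∀ z : Fin na → ℝ, d z = 0 → z = 0)
    (F : (Fin na → ℝ) × (Fin nb → ℝ) → ℝ → (Fin na → ℝ) × (Fin nb → ℝ))
    (G : (Fin nb → ℝ) → ℝ → (Fin na → ℝ) × (Fin nb → ℝ))
    (hFG : ∀ (xa : Fin na → ℝ) (xb : Fin nb → ℝ) (t : ℝ), F (xa, xb) t = G xb t)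
    (L : NNReal)
    (hLip : ∀ t : ℝ, LipschitzWith L fun xb => (G xb t).2)
    (hCont : ∀ xb : Fin nb → ℝ, Continuous fun t => (G xb t).2)
    (R : ℝ) (hR : 0 < R)
    (t0 : ℝ)
    (xi xj : ℝ → (Fin na → ℝ) × (Fin nb → ℝ))
    (hxi : ∀ t ≥ t0, HasDerivAt xi (F (xi t) t) t)
    (hxj : ∀ t ≥ t0, HasDerivAt xj (F (xj t) t) t)
    (hinit : d ((xi t0).1 - (xj t0).1) > R)
    (hb0 : (xi t0).2 = (xj t0).2) :
    ∀ t ≥ t0, d ((xi t).1 - (xj t).1) > R := by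
  intro t ht
  have hF : ∀ x s, F x s = G x.2 s := fun x s => hFG x.1 x.2 s
  have hi2 : ∀ s ≥ t0, HasDerivAt (fun s => (xi s).2) (G (xi s).2 s).2 s := by
    intro s hs
    have h := (hasFDerivAt_snd (𝕜 := ℝ) (p := xi s)).comp_hasDerivAt s (hxi s hs)
    rw [hF] at h
    exact h
  have hj2 : ∀ s ≥ t0, HasDerivAt (fun s => (xj s).2) (G (xj s).2 s).2 s := by
    intro s hs
    have h := (hasFDerivAt_snd (𝕜 := ℝ) (p := xj s)).comp_hasDerivAt s (hxj s hs)
    rw [hF] at h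
    exact h
  have hb : Set.EqOn (fun s => (xi s).2) (fun s => (xj s).2) (Set.Icc t0 t) :=
    ODE_solution_unique (v := fun s y => (G y s).2) hLip
      (fun s hs => (hi2 s hs.1).continuousAt.continuousWithinAt)
      (fun s hs => (hi2 s hs.1).hasDerivWithinAt)
      (fun s hs => (hj2 s hs.1).continuousAt.continuousWithinAt)
      (fun s hs => (hj2 s hs.1).hasDerivWithinAt) hb0
  have hD : ∀ s ∈ Set.Icc t0 t, HasDerivAt (fun s => xi s - xj s) 0 s := by
    intro s hs
    have h := (hxi s hs.1).sub (hxj s hs.1)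
    have e : (xi s).2 = (xj s).2 := hb hs
    rw [hF, hF, e, sub_self] at h
    exact h
  have hc := constant_of_has_deriv_right_zero
    (fun s hs => (hD s hs).continuousAt.continuousWithinAt)
    (fun s hs => (hD s ⟨hs.1, hs.2.le⟩).hasDerivWithinAt) t ⟨ht, le_rfl⟩
  have h1 : (xi t).1 - (xj t).1 = (xi t0).1 - (xj t0).1 := congrArg Prod.fst hc
  rw [h1]
  exact hinit
end

section
/- Let $n_a, n_b$ be natural numbers, let $d$ be a norm on $\mathbb{R}^{n_a}$, let $F$ be a time-dependent vector field on $\mathbb{R}^{n_a} \times \mathbb{R}^{n_b}$ depending only on the $b$-component of the state (i.e. $F((x_a,x_b),t) = G(x_b,t)$ with $x_b \mapsto (G(x_b,t))_b$ Lipschitz uniformly in $t$ and continuous in $t$). Let $x_{\mathcal{H}}, x_1, \dots, x_m : \mathbb{R} \to \mathbb{R}^{n_a} \times \mathbb{R}^{n_b}$ all be solutions of $\dot{x}(t) = F(x(t),t)$ on $[t_0,\infty)$ (a cluster center and the vehicles in the cluster, all applying the same control), with $(x_{\mathcal{H}}(t_0))_b = (x_i(t_0))_b$ for all $i = 1, \dots,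 m$. Then the maximum vehicle distance to the cluster center, $R_{\mathcal{H}}(t) = \max_{1 \le i \le m} d\big((x_{\mathcal{H}}(t))_a - (x_i(t))_a\big)$, is constant in $t$ on $[t_0,\infty)$: $R_{\mathcal{H}}(t) = R_{\mathcal{H}}(t_0)$ for all $t \ge t_0$. -/
/-- If the cluster center and all vehicles of a cluster follow the same dynamics,
which depend only on the `b`-component of the state, and all start with equal
`b`-components, then the maximum vehicle distance to the cluster center is
constant in time. -/
theorem cluster_radius_constant (na nb m : ℕ) (hm : 0 < m)
    (d : Seminorm ℝ (Fin na → ℝ)) (hd : ∀ z : Fin na → ℝ, d z = 0 → z = 0)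
    (F : (Fin na → ℝ) × (Fin nb → ℝ) → ℝ → (Fin na → ℝ) × (Fin nb → ℝ))
    (G : (Fin nb → ℝ) → ℝ → (Fin na → ℝ) × (Fin nb → ℝ))
    (hFG : ∀ (xa : Fin na → ℝ) (xb : Fin nb → ℝ) (t : ℝ), F (xa, xb) t = G xb t)
    (L : NNReal)
    (hLip : ∀ t : ℝ, LipschitzWith L fun xb => (G xb t).2)
    (hCont : ∀ xb : Fin nb → ℝ, Continuous fun t => (G xb t).2)
    (t0 : ℝ)
    (xH : ℝ → (Fin na → ℝ) × (Fin nb → ℝ))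
    (x : Fin m → ℝ → (Fin na → ℝ) × (Fin nb → ℝ))
    (hxH : ∀ t ≥ t0, HasDerivAt xH (F (xH t) t) t)
    (hx : ∀ i : Fin m, ∀ t ≥ t0, HasDerivAt (x i) (F (x i t) t) t)
    (hb0 : ∀ i : Fin m, (xH t0).2 = (x i t0).2) :
    ∀ t ≥ t0,
      (Finset.univ.sup' (Finset.univ_nonempty_iff.mpr ⟨⟨0, hm⟩⟩)
          fun i : Fin m => d ((xH t).1 - (x i t).1)) =
        Finset.univ.sup' (Finset.univ_nonempty_iff.mpr ⟨⟨0, hm⟩⟩)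
          fun i : Fin m => d ((xH t0).1 - (x i t0).1) := by
  have fstD : ∀ {y : ℝ → (Fin na → ℝ) × (Fin nb → ℝ)} {y' : (Fin na → ℝ) × (Fin nb → ℝ)} {t : ℝ},
      HasDerivAt y y' t → HasDerivAt (fun s => (y s).1) y'.1 t := by
    intro y y' t h
    exact ((ContinuousLinearMap.fst ℝ (Fin na → ℝ) (Fin nb → ℝ)).hasFDerivAt.comp_hasDerivAt t h)
  have sndD : ∀ {y : ℝ → (Fin na → ℝ) × (Fin nb → ℝ)} {y' : (Fin na → ℝ) × (Fin nb → ℝ)} {t : ℝ},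
      HasDerivAt y y' t → HasDerivAt (fun s => (y s).2) y'.2 t := by
    intro y y' t h
    exact ((ContinuousLinearMap.snd ℝ (Fin na → ℝ) (Fin nb → ℝ)).hasFDerivAt.comp_hasDerivAt t h)
  have hF : ∀ z t, F z t = G z.2 t := fun z t => hFG z.1 z.2 t
  simp only [hF] at hxH hx
  have hb : ∀ i, ∀ t ≥ t0, (xH t).2 = (x i t).2 := by
    intro i t ht
    have := ODE_solution_unique (v := fun t xb => (G xb t).2) (K := L) (a := t0) (b := t)
      (f := fun s => (xH s).2) (g := fun s => (x i s).2) hLip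
      (fun s hs => (sndD (hxH s hs.1)).continuousAt.continuousWithinAt)
      (fun s hs => (sndD (hxH s hs.1)).hasDerivWithinAt)
      (fun s hs => (sndD (hx i s hs.1)).continuousAt.continuousWithinAt)
      (fun s hs => (sndD (hx i s hs.1)).hasDerivWithinAt) (hb0 i)
    exact this ⟨ht, le_rfl⟩
  intro t ht
  have key : ∀ i, (xH t).1 - (x i t).1 = (xH t0).1 - (x i t0).1 := by
    intro i
    have hD : ∀ s ≥ t0, HasDerivAt (fun s => (xH s).1 - (x i s).1) 0 s := by
      intro s hs
      have h := (fstD (hxH s hs)).sub (fstD (hx i s hs))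
      rw [hb i s hs, sub_self] at h
      exact h
    exact constant_of_has_deriv_right_zero (a := t0) (b := t)
      (fun s hs => (hD s hs.1).continuousAt.continuousWithinAt)
      (fun s hs => (hD s hs.1).hasDerivWithinAt) t ⟨ht, le_rfl⟩
  simp only [key]
end

section
/- Consider six $\{0,1\}$-valued variables $p_{12}, p_{13}, p_{21}, p_{23}, p_{31}, p_{32}$ subject to the pairwise constraints $p_{12} + p_{21} \le 1$, $p_{13} + p_{31} \le 1$, $p_{23} + p_{32} \le 1$ and the row constraints $p_{12} + p_{13} \le 1$, $p_{21} + p_{23} \le 1$, $p_{31} + p_{32} \le 1$ (the feasible set of the three-vehicle ILP), and real coefficients $c_{12}, c_{13}, c_{21}, c_{23}, c_{31}, c_{32}$. Suppose $c_{12} > c_{13}^+ + c_{21}^+ + c_{32}^+$, $c_{23} > c_{13}^+ + c_{21}^+ + c_{32}^+$, and $c_{31} > c_{13}^+ + c_{21}^+ + c_{32}^+$, where $r^+ = \max(r,0)$. Then every maximizer of the objective $\sum_{i \ne j} c_{ij} p_{ij}$ over the feasible set satisfies $p_{12} = p_{23} = p_{31} = 1$ and $p_{13} = p_{21} = p_{32}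 = 0$. -/
/-- The feasible set of the three-vehicle ILP. -/
def ILPFeasible (p12 p13 p21 p23 p31 p32 : ℝ) : Prop :=
  (p12 = 0 ∨ p12 = 1) ∧ (p13 = 0 ∨ p13 = 1) ∧ (p21 = 0 ∨ p21 = 1) ∧
    (p23 = 0 ∨ p23 = 1) ∧ (p31 = 0 ∨ p31 = 1) ∧ (p32 = 0 ∨ p32 = 1) ∧
    p12 + p21 ≤ 1 ∧ p13 + p31 ≤ 1 ∧ p23 + p32 ≤ 1 ∧
    p12 + p13 ≤ 1 ∧ p21 + p23 ≤ 1 ∧ p31 + p32 ≤ 1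

/-- The linear objective of the three-vehicle ILP. -/
def ILPObj (c12 c13 c21 c23 c31 c32 p12 p13 p21 p23 p31 p32 : ℝ) : ℝ :=
  c12 * p12 + c13 * p13 + c21 * p21 + c23 * p23 + c31 * p31 + c32 * p32

/-- Case of Theorem 3 in which all three pairs of vehicles are in potential conflict:
every maximizer of the ILP has `p12 = p23 = p31 = 1` and `p13 = p21 = p32 = 0`. -/
theorem ilp_all_conflicts (c12 c13 c21 c23 c31 c32 : ℝ)
    (hc12 : c12 > max c13 0 + max c21 0 + max c32 0)
    (hc23 : c23 > max c13 0 + max c21 0 + max c32 0)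
    (hc31 : c31 > max c13 0 + max c21 0 + max c32 0)
    (p12 p13 p21 p23 p31 p32 : ℝ)
    (hfeas : ILPFeasible p12 p13 p21 p23 p31 p32)
    (hmax : ∀ q12 q13 q21 q23 q31 q32 : ℝ, ILPFeasible q12 q13 q21 q23 q31 q32 →
      ILPObj c12 c13 c21 c23 c31 c32 q12 q13 q21 q23 q31 q32 ≤
        ILPObj c12 c13 c21 c23 c31 c32 p12 p13 p21 p23 p31 p32) :
    p12 = 1 ∧ p23 = 1 ∧ p31 = 1 ∧ p13 = 0 ∧ p21 = 0 ∧ p32 = 0 := by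
  have h13 := le_max_left c13 0
  have h13' := le_max_right c13 0
  have h21 := le_max_left c21 0
  have h21' := le_max_right c21 0
  have h32 := le_max_left c32 0
  have h32' := le_max_right c32 0
  have key := hmax 1 0 0 1 1 0 (by unfold ILPFeasible; norm_num)
  unfold ILPObj at key
  obtain ⟨a, b, c, d, e, f, g1, g2, g3, g4, g5, g6⟩ := hfeas
  clear hmax
  rcases a with rfl | rfl <;> rcases b with rfl | rfl <;> rcases c with rfl | rfl <;>
    rcases d with rfl | rfl <;> rcases e with rfl | rfl <;> rcases f with rfl | rfl <;>
    first
      | (exfalso; linarith)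
      | norm_num
end

section
/- Consider six $\{0,1\}$-valued variables $p_{12}, p_{13}, p_{21}, p_{23}, p_{31}, p_{32}$ subject to the pairwise constraints $p_{12} + p_{21} \le 1$, $p_{13} + p_{31} \le 1$, $p_{23} + p_{32} \le 1$ and the row constraints $p_{12} + p_{13} \le 1$, $p_{21} + p_{23} \le 1$, $p_{31} + p_{32} \le 1$ (the feasible set of the three-vehicle ILP), and real coefficients $c_{12}, c_{13}, c_{21}, c_{23}, c_{31}, c_{32}$. Suppose $c_{12} > c_{13}^+ + c_{21}^+ + c_{32}^+$ and $c_{23} > c_{13}^+ + c_{21}^+ + c_{32}^+$, where $r^+ = \max(r,0)$, and suppose $c_{31} < 0$. Then every maximizer of the objective $\sum_{i \ne j} c_{ij} p_{ij}$ over the feasible set satisfies $p_{12} = 1$ and $p_{23} = 1$. -/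
/-- Case of Theorem 3 in which exactly the pairs (1,2) and (2,3) are in potential
conflict: every maximizer of the ILP has `p12 = 1` and `p23 = 1`. -/
theorem ilp_two_conflicts (c12 c13 c21 c23 c31 c32 : ℝ)
    (hc12 : c12 > max c13 0 + max c21 0 + max c32 0)
    (hc23 : c23 > max c13 0 + max c21 0 + max c32 0)
    (hc31 : c31 < 0)
    (p12 p13 p21 p23 p31 p32 : ℝ)
    (hfeas : ILPFeasible p12 p13 p21 p23 p31 p32)
    (hmax : ∀ q12 q13 q21 q23 q31 q32 : ℝ, ILPFeasible q12 q13 q21 q23 q31 q32 →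
      ILPObj c12 c13 c21 c23 c31 c32 q12 q13 q21 q23 q31 q32 ≤
        ILPObj c12 c13 c21 c23 c31 c32 p12 p13 p21 p23 p31 p32) :
    p12 = 1 ∧ p23 = 1 := by
  have h := hmax 1 0 0 1 0 0 (by unfold ILPFeasible; norm_num)
  obtain ⟨h12, h13, h21, h23, h31, h32, -⟩ := hfeas
  unfold ILPObj at h
  have a1 := le_max_left c13 0
  have a2 := le_max_right c13 0
  have b1 := le_max_left c21 0
  have b2 := le_max_right c21 0
  have d1 := le_max_left c32 0
  have d2 := le_max_right c32 0
  have e13 : c13 * p13 ≤ max c13 0 := by rcases h13 with rfl | rfl <;> linarith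
  have e21 : c21 * p21 ≤ max c21 0 := by rcases h21 with rfl | rfl <;> linarith
  have e32 : c32 * p32 ≤ max c32 0 := by rcases h32 with rfl | rfl <;> linarith
  have e31 : c31 * p31 ≤ 0 := by rcases h31 with rfl | rfl <;> linarith
  rcases h12 with rfl | rfl <;> rcases h23 with rfl | rfl
  · exfalso; linarith
  · exfalso; linarith
  · exfalso; linarith
  · exact ⟨rfl, rfl⟩
end

section
/- Consider six $\{0,1\}$-valued variables $p_{12}, p_{13}, p_{21}, p_{23}, p_{31}, p_{32}$ subject to the pairwise constraints $p_{12} + p_{21} \le 1$, $p_{13} + p_{31} \le 1$, $p_{23} + p_{32} \le 1$ and the row constraints $p_{12} + p_{13} \le 1$, $p_{21} + p_{23} \le 1$, $p_{31} + p_{32} \le 1$ (the feasible set of the three-vehicle ILP), and real coefficients $c_{12}, c_{13}, c_{21}, c_{23}, c_{31}, c_{32}$. Suppose $c_{12} > c_{13}^+ + c_{21}^+ + c_{32}^+$, where $r^+ = \max(r,0)$, and suppose $c_{23} < 0$ and $c_{31} < 0$. Then every maximizer of the objective $\sum_{i \ne j} c_{ij} p_{ij}$ over the feasible set satisfies $p_{12}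 = 1$. -/
/-- Case of Theorem 3 in which only the pair (1,2) is in potential conflict:
every maximizer of the ILP has `p12 = 1`. -/
theorem ilp_one_conflict (c12 c13 c21 c23 c31 c32 : ℝ)
    (hc12 : c12 > max c13 0 + max c21 0 + max c32 0)
    (hc23 : c23 < 0)
    (hc31 : c31 < 0)
    (p12 p13 p21 p23 p31 p32 : ℝ)
    (hfeas : ILPFeasible p12 p13 p21 p23 p31 p32)
    (hmax : ∀ q12 q13 q21 q23 q31 q32 : ℝ, ILPFeasible q12 q13 q21 q23 q31 q32 →
      ILPObj c12 c13 c21 c23 c31 c32 q12 q13 q21 q23 q31 q32 ≤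
        ILPObj c12 c13 c21 c23 c31 c32 p12 p13 p21 p23 p31 p32) :
    p12 = 1 := by
  have h := hmax 1 0 0 0 0 0 (by unfold ILPFeasible; norm_num)
  obtain ⟨h12, h13, h21, h23, h31, h32, -⟩ := hfeas
  rcases h12 with h12 | h12
  · exfalso
    unfold ILPObj at h
    have key : ∀ c p : ℝ, (p = 0 ∨ p = 1) → c * p ≤ max c 0 := by
      rintro c p (rfl | rfl) <;> simp
    have k13 := key c13 p13 h13
    have k21 := key c21 p21 h21
    have k32 := key c32 p32 h32
    have k23 := key c23 p23 h23
    have k31 := key c31 p31 h31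
    rw [max_eq_right hc23.le] at k23
    rw [max_eq_right hc31.le] at k31
    rw [h12] at h
    linarith
  · exact h12
end

section
/- (Theorem 3 of the paper, combinatorial form.) Consider six $\{0,1\}$-valued variables $p_{12}, p_{13}, p_{21}, p_{23}, p_{31}, p_{32}$ subject to the pairwise constraints $p_{12} + p_{21} \le 1$, $p_{13} + p_{31} \le 1$, $p_{23} + p_{32} \le 1$ and the row constraints $p_{12} + p_{13} \le 1$, $p_{21} + p_{23} \le 1$, $p_{31} + p_{32} \le 1$ (the feasible set of the three-vehicle ILP). Let $b_{12}, b_{23}, b_{31}$ be Booleans indicating whether each of the vehicle pairs $(1,2)$, $(2,3)$, $(3,1)$ is in potential conflict, and let real coefficients $c_{ij}$ satisfy: $c_{12} > c_{13}^+ + c_{21}^+ + c_{32}^+$ if $b_{12}$ holds and $c_{12} = -1$ otherwise; $c_{23} > c_{13}^+ + c_{21}^+ + c_{32}^+$ if $b_{23}$ holds and $c_{23} = -1$ otherwise; $c_{31} > c_{13}^+ + c_{21}^+ + c_{32}^+$ if $b_{31}$ holds and $c_{31} = -1$ otherwise, where $r^+ = \max(r,0)$. Then every maximizer $p^*$ of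 $\sum_{i \ne j} c_{ij} p_{ij}$ over the feasible set satisfies: $b_{12} \Rightarrow p^*_{12} = 1$, $b_{23} \Rightarrow p^*_{23} = 1$, and $b_{31} \Rightarrow p^*_{31} = 1$. -/
/-- Theorem 3 of the paper (combinatorial form): with coefficients chosen according
to which pairs are in potential conflict, every maximizer of the three-vehicle ILP
sets `p_ij = 1` for each conflicting pair. -/
theorem ilp_conflicting_pairs_avoid (b12 b23 b31 : Bool) (c12 c13 c21 c23 c31 c32 : ℝ)
    (hc12 : b12 = true → c12 > max c13 0 + max c21 0 + max c32 0)
    (hc12' : b12 = false → c12 = -1)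
    (hc23 : b23 = true → c23 > max c13 0 + max c21 0 + max c32 0)
    (hc23' : b23 = false → c23 = -1)
    (hc31 : b31 = true → c31 > max c13 0 + max c21 0 + max c32 0)
    (hc31' : b31 = false → c31 = -1)
    (p12 p13 p21 p23 p31 p32 : ℝ)
    (hfeas : ILPFeasible p12 p13 p21 p23 p31 p32)
    (hmax : ∀ q12 q13 q21 q23 q31 q32 : ℝ, ILPFeasible q12 q13 q21 q23 q31 q32 →
      ILPObj c12 c13 c21 c23 c31 c32 q12 q13 q21 q23 q31 q32 ≤
        ILPObj c12 c13 c21 c23 c31 c32 p12 p13 p21 p23 p31 p32) :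
    (b12 = true → p12 = 1) ∧ (b23 = true → p23 = 1) ∧ (b31 = true → p31 = 1) := by
  obtain ⟨h12, h13, h21, h23, h31, h32, -⟩ := hfeas
  -- the dropped terms contribute at most the sum of the positive parts
  have key : ∀ c p : ℝ, (p = 0 ∨ p = 1) → c * p ≤ max c 0 := by
    rintro c p (rfl | rfl) <;> simp
  have k13 := key c13 p13 h13
  have k21 := key c21 p21 h21
  have k32 := key c32 p32 h32
  -- setting p13, p21, p32 to zero makes every choice of the other three feasible
  have feas : ∀ x y z : ℝ, (x = 0 ∨ x = 1) → (y = 0 ∨ y = 1) → (z = 0 ∨ z = 1) →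
      ILPFeasible x 0 0 y z 0 := by
    rintro x y z (rfl | rfl) (rfl | rfl) (rfl | rfl) <;> norm_num [ILPFeasible]
  refine ⟨fun hb => ?_, fun hb => ?_, fun hb => ?_⟩
  · refine h12.resolve_left fun h0 => ?_
    have hm := hmax 1 0 0 p23 p31 0 (feas _ _ _ (Or.inr rfl) h23 h31)
    have hc := hc12 hb
    simp only [ILPObj, h0] at hm
    linarith
  · refine h23.resolve_left fun h0 => ?_
    have hm := hmax p12 0 0 1 p31 0 (feas _ _ _ h12 (Or.inr rfl) h31)
    have hc := hc23 hb
    simp only [ILPObj, h0] at hm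
    linarith
  · refine h31.resolve_left fun h0 => ?_
    have hm := hmax p12 0 0 p23 1 0 (feas _ _ _ h12 h23 (Or.inr rfl))
    have hc := hc31 hb
    simp only [ILPObj, h0] at hm
    linarith
end

section
/- Let $n_a, n_b$ be natural numbers, $d$ a norm on $\mathbb{R}^{n_a}$, and $F$ a time-dependent vector field on $\mathbb{R}^{n_a} \times \mathbb{R}^{n_b}$ depending only on the $b$-component (i.e. $F((x_a,x_b),t) = G(x_b,t)$ with $x_b \mapsto (G(x_b,t))_b$ Lipschitz uniformly in $t$ and continuous in $t$). Let $x_1, \dots, x_m : \mathbb{R} \to \mathbb{R}^{n_a} \times \mathbb{R}^{n_b}$ all be solutions of $\dot{x}(t) = F(x(t),t)$ on $[t_0, \infty)$ (all vehicles in a cluster applying the same control), with pairwise equal initial $b$-components $(x_i(t_0))_b = (x_j(t_0))_b$ for all $i,j$, and pairwise initial safety $d\big((x_i(t_0))_a - (x_j(t_0))_a\big) > R_{ij}$ for all $i \ne j$, where $R_{ij} = R_{ji} > 0$. Then every pair of vehicles in the cluster remains safe for all time: $d\big((x_i(t))_a - (x_j(t))_a\big) > R_{ij}$ for all $i \ne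 j$ and all $t \ge t_0$. -/
/-- In-cluster safety: if all vehicles of a cluster follow the same dynamics,
which depend only on the `b`-component of the state, start with pairwise equal
`b`-components, and start pairwise outside each other's danger zones, then every
pair of vehicles in the cluster remains safe for all time. -/
theorem cluster_pairwise_safe (na nb m : ℕ)
    (d : Seminorm ℝ (Fin na → ℝ)) (hd : ∀ z : Fin na → ℝ, d z = 0 → z = 0)
    (F : (Fin na → ℝ) × (Fin nb → ℝ) → ℝ → (Fin na → ℝ) × (Fin nb → ℝ))
    (G : (Fin nb → ℝ) → ℝ → (Fin na → ℝ) × (Fin nb → ℝ))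
    (hFG : ∀ (xa : Fin na → ℝ) (xb : Fin nb → ℝ) (t : ℝ), F (xa, xb) t = G xb t)
    (L : NNReal)
    (hLip : ∀ t : ℝ, LipschitzWith L fun xb => (G xb t).2)
    (hCont : ∀ xb : Fin nb → ℝ, Continuous fun t => (G xb t).2)
    (t0 : ℝ)
    (x : Fin m → ℝ → (Fin na → ℝ) × (Fin nb → ℝ))
    (hx : ∀ i : Fin m, ∀ t ≥ t0, HasDerivAt (x i) (F (x i t) t) t)
    (R : Fin m → Fin m → ℝ)
    (hRpos : ∀ i j : Fin m, i ≠ j → 0 < R i j)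
    (hRsymm : ∀ i j : Fin m, R i j = R j i)
    (hb0 : ∀ i j : Fin m, (x i t0).2 = (x j t0).2)
    (hinit : ∀ i j : Fin m, i ≠ j → d ((x i t0).1 - (x j t0).1) > R i j) :
    ∀ i j : Fin m, i ≠ j → ∀ t ≥ t0, d ((x i t).1 - (x j t).1) > R i j := by
  intro i j hij t ht
  have hF : ∀ (k : Fin m) (s : ℝ), F (x k s) s = G (x k s).2 s := fun k s =>
    hFG (x k s).1 (x k s).2 s
  have h1 : ∀ k : Fin m, ∀ s ≥ t0, HasDerivAt (fun s => (x k s).1) (G (x k s).2 s).1 s := by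
    intro k s hs
    have h := (hx k s hs).fst
    rw [hF] at h
    exact h
  have h2 : ∀ k : Fin m, ∀ s ≥ t0, HasDerivAt (fun s => (x k s).2) (G (x k s).2 s).2 s := by
    intro k s hs
    have h := (hx k s hs).snd
    rw [hF] at h
    exact h
  have hb : Set.EqOn (fun s => (x i s).2) (fun s => (x j s).2) (Set.Icc t0 t) :=
    ODE_solution_unique (v := fun s y => (G y s).2) (K := L) (fun s => hLip s)
      (fun s hs => (h2 i s hs.1).continuousAt.continuousWithinAt)
      (fun s hs => (h2 i s hs.1).hasDerivWithinAt)
      (fun s hs => (h2 j s hs.1).continuousAt.continuousWithinAt)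
      (fun s hs => (h2 j s hs.1).hasDerivWithinAt)
      (hb0 i j)
  have hc := constant_of_has_deriv_right_zero (f := fun s => (x i s).1 - (x j s).1)
    (a := t0) (b := t)
    (fun s hs => ((h1 i s hs.1).sub (h1 j s hs.1)).continuousAt.continuousWithinAt)
    (fun s hs => by
      have h := ((h1 i s hs.1).sub (h1 j s hs.1))
      have e : (x i s).2 = (x j s).2 := hb ⟨hs.1, hs.2.le⟩
      rw [e, sub_self] at h
      exact h.hasDerivWithinAt) t ⟨ht, le_refl t⟩
  have hc' : (x i t).1 - (x j t).1 = (x i t0).1 - (x j t0).1 := hc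
  rw [hc']
  exact hinit i j hij
end
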